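/- Let C, λ, M be natural numbers with C ≥ 2, λ ≥ 1, M ≥ 3, and let α ≥ 1 be a real number, and assume the coarsening factor dominates the basis count in the sense that C > λ^α. Define S = (C^{M-2} − 1)/(C − 1), O_2 = C · C^{(M-1)α}, and O_M = C^α · C · ( λ^α · S + C^{M-2} ). Then (1/3) · C^{(M-2)(α − 1)} · O_M ≤ O_2 ≤ C^{(M-2)(α − 1)} · O_M; in particular the two-level construction cost exceeds the multilevel construction cost by a factor of order C^{(M-2)(α − 1)}. -/

import Mathlib

/-!
Write `n = M - 2`. Since `C^(n(α-1)) · C^n = C^(nα)`, the two-level cost factors exactly as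
`O₂ = C^(n(α-1)) · (C^α · C · C^n)`, so both bounds compare `C^n` with `λ^α S + C^n`, i.e. they
reduce to `0 ≤ λ^α S ≤ 2 C^n`. The upper bound holds because
`λ^α < C ≤ 2 (C - 1)` and `(C - 1) S = C^n - 1`; the constant `1/3` is `1 / (2 + 1)`.
-/

/-- Two-sided comparison of the two-level and multilevel re-iterated GMsFEM costs:
if `C > λ^α`, then with `S = (C^{M-2} − 1)/(C − 1)`, `O₂ = C · C^{(M-1)α}` and
`O_M = C^α · C · (λ^α S + C^{M-2})`, one has
`(1/3) · C^{(M-2)(α−1)} · O_M ≤ O₂ ≤ C^{(M-2)(α−1)} · O_M`. -/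
theorem two_level_cost_dominates
    (C lam M : ℕ) (hC : 2 ≤ C) (hlam : 1 ≤ lam) (hM : 3 ≤ M)
    (α : ℝ) (hα : 1 ≤ α)
    (hdom : (lam : ℝ) ^ α < (C : ℝ))
    (S O2 OM : ℝ)
    (hS : S = ((C : ℝ) ^ (M - 2) - 1) / ((C : ℝ) - 1))
    (hO2 : O2 = (C : ℝ) * (C : ℝ) ^ (((M - 1 : ℕ) : ℝ) * α))
    (hOM : OM = (C : ℝ) ^ α * (C : ℝ) * ((lam : ℝ) ^ α * S + (C : ℝ) ^ (M - 2))) :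
    (1 / 3) * (C : ℝ) ^ (((M - 2 : ℕ) : ℝ) * (α - 1)) * OM ≤ O2 ∧
      O2 ≤ (C : ℝ) ^ (((M - 2 : ℕ) : ℝ) * (α - 1)) * OM := by
  obtain ⟨n, rfl⟩ : ∃ n, M = n + 2 := ⟨M - 2, by omega⟩
  rw [show n + 2 - 2 = n by omega] at *
  rw [show n + 2 - 1 = n + 1 by omega] at hO2
  have hC2 : (2 : ℝ) ≤ C := by exact_mod_cast hC
  have hC0 : (0 : ℝ) < C := by linarith
  have hC1 : (0 : ℝ) < (C : ℝ) - 1 := by linarith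
  have hpow : (1 : ℝ) ≤ (C : ℝ) ^ n := one_le_pow₀ (by linarith)
  have hS0 : 0 ≤ S := by
    rw [hS]
    exact div_nonneg (by linarith) hC1.le
  have hSmul : ((C : ℝ) - 1) * S = (C : ℝ) ^ n - 1 := by
    rw [hS]
    field_simp
  have hL0 : 0 ≤ (lam : ℝ) ^ α := by positivity
  have hLS0 : 0 ≤ (lam : ℝ) ^ α * S := mul_nonneg hL0 hS0
  have hLS : (lam : ℝ) ^ α * S ≤ 2 * (C : ℝ) ^ n := by
    have h : (lam : ℝ) ^ α * S ≤ (2 * ((C : ℝ) - 1)) * S :=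
      mul_le_mul_of_nonneg_right (by linarith) hS0
    linarith
  have hfac : O2 = (C : ℝ) ^ ((n : ℝ) * (α - 1)) * ((C : ℝ) ^ α * C * (C : ℝ) ^ n) := by
    have hexp : (C : ℝ) ^ (((n + 1 : ℕ) : ℝ) * α)
        = (C : ℝ) ^ ((n : ℝ) * (α - 1)) * (C : ℝ) ^ α * (C : ℝ) ^ n := by
      rw [← Real.rpow_natCast (C : ℝ) n, ← Real.rpow_add hC0, ← Real.rpow_add hC0]
      congr 1
      push_cast
      ring
    rw [hO2, hexp]
    ring
  have hP : 0 ≤ (C : ℝ) ^ ((n : ℝ) * (α - 1)) * ((C : ℝ) ^ α * C) := by positivity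
  rw [hfac, hOM]
  constructor
  · have h := mul_le_mul_of_nonneg_left
      (show (lam : ℝ) ^ α * S + (C : ℝ) ^ n ≤ 3 * (C : ℝ) ^ n by linarith) hP
    linarith
  · have h := mul_le_mul_of_nonneg_left
      (show (C : ℝ) ^ n ≤ (lam : ℝ) ^ α * S + (C : ℝ) ^ n by linarith) hP
    linarith
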